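/- Let p > 1. There exists a constant c_p ≥ 1, depending only on p, such that for all a, b ∈ ℝ with |a| + |b| > 0, (1/c_p) (|a| + |b|)^{p-2} ≤ ∫₀¹ |a + t b|^{p-2} dt ≤ c_p (|a| + |b|)^{p-2}, where the integral is the Lebesgue integral of t ↦ |a + t b|^{p-2} over (0,1) (finite for all such a, b since p > 1). -/

import Mathlib

/-!
Write `s = |a| + |b|` and `q = p - 2 > -1`. Besides the trivial bound `|a + t b| ≤ s` on `(0,1)`,
there is a point `t₀ ∈ [0,1]` with `(s/4) |t - t₀| ≤ |a + t b|` for all `t ∈ [0,1]`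
(`exists_linear_lower_bound`): if `|b| ≥ s/4`, take for `t₀` the point of `[0,1]` nearest to the zero
`-a/b`, and otherwise `|a + t b| ≥ s/2` throughout.

Whatever the sign of `q`, a number in `[l, s]` has `q`-th power at most `s^q + l^q` and at least
`min (s^q) (l^q)`. With `l = (s/4)|t - t₀|` the first bound dominates the integrand by an integrable
function of integral at most `s^q (1 + 4^{-q} ∫_{-1}^{1} |u|^q du)`. For the lower bound, one of
`(0,1/4)`, `(3/4,1)` stays at distance at least `1/4` from `t₀`, and there `s/16 ≤ |a + t b| ≤ s`.
-/

open MeasureTheory Set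

theorem exists_linear_lower_bound (a b : ℝ) (hs : 0 < |a| + |b|) :
    ∃ t₀ ∈ Icc (0 : ℝ) 1, ∀ t ∈ Icc (0 : ℝ) 1,
      (|a| + |b|) / 4 * |t - t₀| ≤ |a + t * b| := by
  rcases le_or_gt ((|a| + |b|) / 4) |b| with h | h
  · have hb : b ≠ 0 := by
      rintro rfl
      rw [abs_zero] at h hs
      linarith
    refine ⟨max 0 (min 1 (-a / b)), ⟨le_max_left _ _, max_le zero_le_one (min_le_left _ _)⟩, ?_⟩
    intro t ht
    have e : a + t * b = b * (t - -a / b) := by field_simp; ring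
    rw [e, abs_mul]
    refine mul_le_mul h ?_ (abs_nonneg _) (abs_nonneg _)
    -- the projection onto `[0,1]` is `1`-Lipschitz and fixes `t`
    obtain ⟨h0, h1⟩ := ht
    generalize -a / b = x
    rcases le_total 1 x with hx | hx
    · rw [min_eq_left hx, max_eq_right zero_le_one, abs_of_nonpos (by linarith),
        abs_of_nonpos (by linarith)]
      linarith
    · rw [min_eq_right hx]
      rcases le_total 0 x with hx' | hx'
      · rw [max_eq_right hx']
      · rw [max_eq_left hx', abs_of_nonneg (by linarith), abs_of_nonneg (by linarith)]
        linarith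
  · refine ⟨0, ⟨le_rfl, zero_le_one⟩, fun t ht => ?_⟩
    obtain ⟨h0, h1⟩ := ht
    rw [sub_zero, abs_of_nonneg h0]
    have h2 : |a| ≤ |a + t * b| + |t * b| := by
      simpa using abs_sub (a + t * b) (t * b)
    have h3 : |t * b| ≤ |b| := by
      rw [abs_mul, abs_of_nonneg h0]
      exact mul_le_of_le_one_left (abs_nonneg _) h1
    nlinarith

theorem abs_add_mul_le (a b : ℝ) {t : ℝ} (ht : t ∈ Icc (0 : ℝ) 1) :
    |a + t * b| ≤ |a| + |b| := by
  refine (abs_add_le _ _).trans ?_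
  rw [abs_mul, abs_of_nonneg ht.1]
  have := mul_le_of_le_one_left (abs_nonneg b) ht.2
  linarith

theorem rpow_le_rpow_add_rpow {l x s : ℝ} (q : ℝ) (hl : 0 < l) (hlx : l ≤ x) (hxs : x ≤ s) :
    x ^ q ≤ s ^ q + l ^ q := by
  rcases le_total 0 q with hq | hq
  · have := Real.rpow_le_rpow (hl.le.trans hlx) hxs hq
    have := Real.rpow_nonneg hl.le q
    linarith
  · have := Real.rpow_le_rpow_of_nonpos hl hlx hq
    have := Real.rpow_nonneg (hl.le.trans (hlx.trans hxs)) q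
    linarith

theorem min_rpow_le_rpow {l x s : ℝ} (q : ℝ) (hl : 0 < l) (hlx : l ≤ x) (hxs : x ≤ s) :
    min (s ^ q) (l ^ q) ≤ x ^ q := by
  rcases le_total 0 q with hq | hq
  · exact (min_le_right _ _).trans (Real.rpow_le_rpow hl.le hlx hq)
  · exact (min_le_left _ _).trans (Real.rpow_le_rpow_of_nonpos (hl.trans_le hlx) hxs hq)

theorem intervalIntegrable_abs_rpow {q : ℝ} (hq : -1 < q) :
    IntervalIntegrable (fun u : ℝ => |u| ^ q) volume (-1) 1 := by
  have h1 : IntervalIntegrable (fun u : ℝ => |u| ^ q) volume 0 1 := by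
    refine (intervalIntegral.intervalIntegrable_rpow' hq).congr fun u hu => ?_
    rw [uIoc_of_le zero_le_one] at hu
    simp only [abs_of_pos hu.1]
  have h2 : IntervalIntegrable (fun u : ℝ => |u| ^ q) volume (-1) 0 := by
    have := (IntervalIntegrable.iff_comp_neg (f := fun u : ℝ => |u| ^ q) (a := 0) (b := 1)).1 h1
    simp only [abs_neg, neg_zero] at this
    exact this.symm
  exact h2.trans h1

/-- The integral of `|t - t₀| ^ q` over `(0,1)` is bounded uniformly in `t₀ ∈ [0,1]`, since `(0,1)`
is contained in the interval of radius `1` around `t₀`. -/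
theorem integral_abs_sub_rpow_le {q : ℝ} (hq : -1 < q) {t₀ : ℝ} (ht₀ : t₀ ∈ Icc (0 : ℝ) 1) :
    IntegrableOn (fun t : ℝ => |t - t₀| ^ q) (Ioo 0 1) ∧
      (∫ t in Ioo (0 : ℝ) 1, |t - t₀| ^ q) ≤ ∫ u in (-1 : ℝ)..1, |u| ^ q := by
  have h1 : IntervalIntegrable (fun t : ℝ => |t - t₀| ^ q) volume (-1 + t₀) (1 + t₀) :=
    (intervalIntegrable_abs_rpow hq).comp_sub_right t₀
  have hle : -1 + t₀ ≤ 1 + t₀ := by linarith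
  have hsub : Ioo (0 : ℝ) 1 ⊆ Ioc (-1 + t₀) (1 + t₀) := fun t ht =>
    ⟨by linarith [ht.1, ht₀.2], by linarith [ht.2, ht₀.1]⟩
  have h2 := (intervalIntegrable_iff_integrableOn_Ioc_of_le hle).1 h1
  refine ⟨h2.mono_set hsub, ?_⟩
  have e : (∫ u in (-1 : ℝ)..1, |u| ^ q) = ∫ t in (-1 + t₀)..(1 + t₀), |t - t₀| ^ q := by
    rw [intervalIntegral.integral_comp_sub_right (fun u : ℝ => |u| ^ q) t₀]
    simp
  rw [e, intervalIntegral.integral_of_le hle]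
  exact setIntegral_mono_set h2 (ae_of_all _ fun t => Real.rpow_nonneg (abs_nonneg _) _)
    hsub.eventuallyLE

theorem integrableOn_and_integral_le {q : ℝ} (hq : -1 < q) (a b : ℝ) (hs : 0 < |a| + |b|) :
    IntegrableOn (fun t : ℝ => |a + t * b| ^ q) (Ioo 0 1) ∧
      (∫ t in Ioo (0 : ℝ) 1, |a + t * b| ^ q) ≤
        (1 + (1 / 4) ^ q * ∫ u in (-1 : ℝ)..1, |u| ^ q) * (|a| + |b|) ^ q := by
  obtain ⟨t₀, ht₀, hlow⟩ := exists_linear_lower_bound a b hs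
  obtain ⟨hint, hI⟩ := integral_abs_sub_rpow_le hq ht₀
  set s := |a| + |b| with hs_def
  have hconst : IntegrableOn (fun _ : ℝ => s ^ q) (Ioo (0 : ℝ) 1) :=
    integrableOn_const (by simp)
  have hg : IntegrableOn (fun t : ℝ => s ^ q + (s / 4) ^ q * |t - t₀| ^ q) (Ioo 0 1) :=
    hconst.add (hint.const_mul _)
  have hbound : ∀ᵐ t ∂(volume.restrict (Ioo (0 : ℝ) 1)),
      |a + t * b| ^ q ≤ s ^ q + (s / 4) ^ q * |t - t₀| ^ q := by
    have hne : ∀ᵐ t ∂(volume.restrict (Ioo (0 : ℝ) 1)), t ≠ t₀ :=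
      ae_restrict_of_ae (Measure.ae_ne volume t₀)
    filter_upwards [hne, ae_restrict_mem measurableSet_Ioo] with t hne ht
    have hpos : 0 < |t - t₀| := abs_pos.2 (sub_ne_zero.2 hne)
    rw [← Real.mul_rpow (by positivity) hpos.le]
    exact rpow_le_rpow_add_rpow q (by positivity) (hlow t (Ioo_subset_Icc_self ht))
      (abs_add_mul_le a b (Ioo_subset_Icc_self ht))
  have hf : IntegrableOn (fun t : ℝ => |a + t * b| ^ q) (Ioo 0 1) := by
    refine Integrable.mono' hg (Measurable.aestronglyMeasurable (by fun_prop)) ?_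
    filter_upwards [hbound] with t ht
    rwa [Real.norm_of_nonneg (Real.rpow_nonneg (abs_nonneg _) _)]
  refine ⟨hf, (integral_mono_ae hf hg hbound).trans ?_⟩
  rw [integral_add hconst (hint.const_mul _), integral_const_mul]
  have e : (s / 4) ^ q = (1 / 4) ^ q * s ^ q := by
    rw [← Real.mul_rpow (by norm_num) hs.le]
    congr 1
    ring
  have hpos : 0 ≤ (s / 4) ^ q := by positivity
  have := mul_le_mul_of_nonneg_left hI hpos
  rw [e] at this ⊢
  simp
  linarith

theorem le_integral {q : ℝ} (a b : ℝ) (hs : 0 < |a| + |b|)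
    (hf : IntegrableOn (fun t : ℝ => |a + t * b| ^ q) (Ioo 0 1)) :
    min 1 ((1 / 16) ^ q) / 4 * (|a| + |b|) ^ q ≤ ∫ t in Ioo (0 : ℝ) 1, |a + t * b| ^ q := by
  obtain ⟨t₀, ht₀, hlow⟩ := exists_linear_lower_bound a b hs
  -- the quarter interval at the end of `(0,1)` farther from `t₀`
  obtain ⟨c, hc0, hc1, hfar⟩ : ∃ c : ℝ, 0 ≤ c ∧ c + 1 / 4 ≤ 1 ∧
      ∀ t ∈ Ioo c (c + 1 / 4), 1 / 4 ≤ |t - t₀| := by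
    rcases le_total t₀ (1 / 2) with h | h
    · exact ⟨3 / 4, by norm_num, by norm_num, fun t ht =>
        le_trans (by linarith [ht.1]) (le_abs_self _)⟩
    · exact ⟨0, by norm_num, by norm_num, fun t ht =>
        le_trans (by linarith [ht.2]) (neg_le_abs _)⟩
  have hsub : Ioo c (c + 1 / 4) ⊆ Ioo (0 : ℝ) 1 := Ioo_subset_Ioo hc0 hc1
  set s := |a| + |b| with hs_def
  have e : (s / 16) ^ q = (1 / 16) ^ q * s ^ q := by
    rw [← Real.mul_rpow (by norm_num) hs.le]
    congr 1
    ring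
  have hpt : ∀ t ∈ Ioo c (c + 1 / 4), min 1 ((1 / 16) ^ q) * s ^ q ≤ |a + t * b| ^ q := by
    intro t ht
    have ht' := Ioo_subset_Icc_self (hsub ht)
    rw [min_mul_of_nonneg _ _ (by positivity : 0 ≤ s ^ q), one_mul, ← e]
    refine min_rpow_le_rpow q (by positivity) ?_ (abs_add_mul_le a b ht')
    refine le_trans ?_ (hlow t ht')
    nlinarith [hfar t ht]
  calc min 1 ((1 / 16) ^ q) / 4 * s ^ q
      = ∫ _t in Ioo c (c + 1 / 4), min 1 ((1 / 16) ^ q) * s ^ q := by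
        simp
        ring
    _ ≤ ∫ t in Ioo c (c + 1 / 4), |a + t * b| ^ q :=
        setIntegral_mono_on (integrableOn_const (by simp)) (hf.mono_set hsub) measurableSet_Ioo hpt
    _ ≤ _ := setIntegral_mono_set hf
        (ae_of_all _ fun t => Real.rpow_nonneg (abs_nonneg _) _) hsub.eventuallyLE

/-- Lemma 2.3: the algebraic two-sided estimate
`(1/c_p)(|a|+|b|)^{p-2} ≤ ∫₀¹ |a+tb|^{p-2} dt ≤ c_p (|a|+|b|)^{p-2}`. -/
theorem integral_power_two_sided (p : ℝ) (hp : 1 < p) :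
    ∃ c : ℝ, 1 ≤ c ∧ ∀ a b : ℝ, 0 < |a| + |b| →
      c⁻¹ * (|a| + |b|) ^ (p - 2) ≤ (∫ t in Set.Ioo (0 : ℝ) 1, |a + t * b| ^ (p - 2)) ∧
      (∫ t in Set.Ioo (0 : ℝ) 1, |a + t * b| ^ (p - 2)) ≤ c * (|a| + |b|) ^ (p - 2) := by
  have hq : -1 < p - 2 := by linarith
  generalize p - 2 = q at hq
  set A : ℝ := 1 + (1 / 4) ^ q * ∫ u in (-1 : ℝ)..1, |u| ^ q with hA
  set B : ℝ := min 1 ((1 / 16) ^ q) / 4 with hB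
  have hA1 : 1 ≤ A := by
    have : 0 ≤ ∫ u in (-1 : ℝ)..1, |u| ^ q :=
      intervalIntegral.integral_nonneg (by norm_num) fun u _ => by positivity
    have : 0 ≤ (1 / 4 : ℝ) ^ q * ∫ u in (-1 : ℝ)..1, |u| ^ q := by positivity
    linarith
  have hB0 : 0 < B := by positivity
  refine ⟨max A B⁻¹, hA1.trans (le_max_left _ _), fun a b hs => ?_⟩
  obtain ⟨hf, hup⟩ := integrableOn_and_integral_le hq a b hs
  have hsq : 0 ≤ (|a| + |b|) ^ q := Real.rpow_nonneg hs.le q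
  refine ⟨le_trans ?_ (le_integral a b hs hf), hup.trans ?_⟩
  · exact mul_le_mul_of_nonneg_right (inv_le_of_inv_le₀ hB0 (le_max_right _ _)) hsq
  · exact mul_le_mul_of_nonneg_right (le_max_left _ _) hsq
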